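/- Let q ≥ 2 and ε > 0, and let W^r : X → X be the randomized response mechanism on an alphabet of size q, with W^r(y|x) = e^ε/(e^ε + q − 1) if y = x and 1/(e^ε + q − 1) otherwise. Then W^r is ε-LDP, and for any input distributions P₀, P₁ with output distributions Q₀, Q₁: (i) d_TV(Q₀,Q₁) = ((e^ε − 1)/(e^ε + q − 1)) d_TV(P₀,P₁); (ii) D^J_∞(Q₀,Q₁) ≤ min{2ε, ((e^ε−1)/(e^ε+1)) · D^J_∞(P₀,P₁)} whenever D^J_∞(P₀,P₁) < ∞. -/

import Mathlib

/-!
The randomized response output is `Q y = (1 + (e^ε - 1) P y) / (e^ε + q - 1)`, so differences of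
output probabilities are exactly `(e^ε - 1) / (e^ε + q - 1)` times differences of input
probabilities; this is (i).

Part (ii) is the Birkhoff–Hopf contraction of the Hilbert projective metric, since `D^J_∞` is the
Hilbert distance between `P₀` and `P₁`. Let `α = max P₀/P₁`, `β = max P₁/P₀` and `K = e^ε`. The
vectors `E = α P₁ - P₀` and `F = β P₀ - P₁` are entrywise nonnegative and span the same plane as
`P₀, P₁`. Any two columns `y`, `z` of the channel agree up to a factor `K`, so
`(F W)(y) (E W)(z) ≤ K² (F W)(z) (E W)(y)`. Rewriting `Q₀ y Q₁ z / (Q₁ y Q₀ z)` in terms of these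
four numbers and maximizing gives the bound `((1 + K m) / (K + m))²` with `m = √(α β)`
(`birkhoff_four`, `birkhoff_ratio`), and a derivative computation bounds this by
`m ^ (2 (K - 1) / (K + 1))` (`log_mobius_le`). The bound `2ε` holds because `Q₀ y ≤ K Q₀ z` and
`Q₁ z ≤ K Q₁ y`.
-/

/-- The optimization behind Birkhoff's contraction coefficient, in homogeneous form: with
`s = b / a`, `t = d / c` and `s ≤ K² t`, the quotient `(1 + m² s)(1 + t) / ((1 + s)(1 + m² t))` is at
most `((1 + K m) / (K + m))²`. -/
lemma birkhoff_four {K m a b c d : ℝ} (hK : 1 ≤ K) (hm : 1 ≤ m) (ha : 0 ≤ a) (hb : 0 ≤ b)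
    (hc : 0 ≤ c) (hd : 0 ≤ d) (h : b * c ≤ K ^ 2 * (a * d)) :
    (a + m ^ 2 * b) * (c + d) * (K + m) ^ 2 ≤ (a + b) * (c + m ^ 2 * d) * (1 + K * m) ^ 2 := by
  obtain ⟨a, ha', rfl⟩ : ∃ t, 0 ≤ t ∧ a = t ^ 2 := ⟨√a, Real.sqrt_nonneg _, (Real.sq_sqrt ha).symm⟩
  obtain ⟨b, hb', rfl⟩ : ∃ t, 0 ≤ t ∧ b = t ^ 2 := ⟨√b, Real.sqrt_nonneg _, (Real.sq_sqrt hb).symm⟩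
  obtain ⟨c, hc', rfl⟩ : ∃ t, 0 ≤ t ∧ c = t ^ 2 := ⟨√c, Real.sqrt_nonneg _, (Real.sq_sqrt hc).symm⟩
  obtain ⟨d, hd', rfl⟩ : ∃ t, 0 ≤ t ∧ d = t ^ 2 := ⟨√d, Real.sqrt_nonneg _, (Real.sq_sqrt hd).symm⟩
  have hR : b * c ≤ K * (a * d) := by
    apply le_of_sq_le_sq _ (by positivity)
    nlinarith
  have hK2 : 0 ≤ K ^ 2 - 1 := by nlinarith
  have hm2 : 0 ≤ m ^ 2 - 1 := by nlinarith
  -- The difference of the two sides factors: a square from AM-GM plus a multiple of `K a d - b c`.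
  have key : 0 ≤ (m ^ 2 - 1) * ((K ^ 2 - 1) * (a * c - m * (b * d)) ^ 2
      + (K * (a * d) - b * c)
        * ((K * m ^ 2 + 2 * m + K) * (a * d) + (m ^ 2 + 2 * K * m + 1) * (b * c))) := by
    have := sub_nonneg.2 hR
    positivity
  linear_combination key

/-- `birkhoff_four` transported to the values `p₀, p₁` and `r₀, r₁` of two positive functionals at
`P₀, P₁`, where `m² = α β`. -/
lemma birkhoff_ratio {K m α β p₀ p₁ r₀ r₁ : ℝ} (hK : 1 ≤ K) (hm : 1 ≤ m) (hβ : 0 < β)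
    (hαβ : m ^ 2 = α * β) (hp₁ : 0 < p₁)
    (hpE : 0 ≤ α * p₁ - p₀) (hpF : 0 ≤ β * p₀ - p₁)
    (hrE : 0 ≤ α * r₁ - r₀) (hrF : 0 ≤ β * r₀ - r₁)
    (hE : α * r₁ - r₀ ≤ K * (α * p₁ - p₀)) (hF : β * p₀ - p₁ ≤ K * (β * r₀ - r₁)) :
    p₀ * r₁ * (K + m) ^ 2 ≤ p₁ * r₀ * (1 + K * m) ^ 2 := by
  rcases hm.eq_or_lt with rfl | hlt
  · -- Here `α β = 1`, so `α p₁ - p₀` and `β p₀ - p₁` have opposite signs, and both vanish.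
    have h1 : p₀ = α * p₁ := by nlinarith
    have h2 : r₀ = α * r₁ := by nlinarith
    subst h1 h2
    apply le_of_eq; ring
  · have hM : 0 < m ^ 2 - 1 := by nlinarith
    have h := birkhoff_four hK hm (mul_nonneg hβ.le hpE) hpF (mul_nonneg hβ.le hrE) hrF (by
      have := mul_le_mul hF hE hrE (by positivity)
      have := mul_le_mul_of_nonneg_left this hβ.le
      linarith)
    have e1 : β * (α * p₁ - p₀) + m ^ 2 * (β * p₀ - p₁) = (m ^ 2 - 1) * β * p₀ := by
      rw [hαβ]; ring
    have e2 : β * (α * r₁ - r₀) + (β * r₀ - r₁) = (m ^ 2 - 1) * r₁ := by rw [hαβ]; ring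
    have e3 : β * (α * p₁ - p₀) + (β * p₀ - p₁) = (m ^ 2 - 1) * p₁ := by rw [hαβ]; ring
    have e4 : β * (α * r₁ - r₀) + m ^ 2 * (β * r₀ - r₁) = (m ^ 2 - 1) * β * r₀ := by
      rw [hαβ]; ring
    rw [e1, e2, e3, e4] at h
    have hpos : 0 < (m ^ 2 - 1) ^ 2 * β := by positivity
    refine le_of_mul_le_mul_left ?_ hpos
    linarith

/-- The two sides agree at `m = 1`, and the derivatives compare because `(m - 1)² ≥ 0`. -/
lemma log_mobius_le {K m : ℝ} (hK : 1 ≤ K) (hm : 1 ≤ m) :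
    Real.log ((1 + K * m) / (K + m)) ≤ (K - 1) / (K + 1) * Real.log m := by
  let g : ℝ → ℝ := fun t => (K - 1) / (K + 1) * Real.log t - Real.log (1 + K * t) + Real.log (K + t)
  have hd : ∀ t : ℝ, 1 ≤ t →
      HasDerivAt g ((K - 1) / (K + 1) * t⁻¹ - K / (1 + K * t) + 1 / (K + t)) t := by
    intro t ht
    have h1 : HasDerivAt (fun t : ℝ => 1 + K * t) K t := by
      simpa using ((hasDerivAt_id t).const_mul K).const_add 1
    have h2 : HasDerivAt (fun t : ℝ => K + t) 1 t := (hasDerivAt_id t).const_add K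
    exact (((Real.hasDerivAt_log (by positivity)).const_mul _).sub
      (h1.log (by positivity))).add (h2.log (by positivity))
  have hmono : MonotoneOn g (Set.Ici 1) := by
    apply monotoneOn_of_deriv_nonneg (convex_Ici 1)
    · exact fun t ht => (hd t ht).continuousAt.continuousWithinAt
    · intro t ht
      rw [interior_Ici] at ht
      exact (hd t (le_of_lt ht)).differentiableAt.differentiableWithinAt
    · intro t ht
      rw [interior_Ici] at ht
      have ht : 1 < t := ht
      rw [(hd t ht.le).deriv]
      have e : (K - 1) / (K + 1) * t⁻¹ - K / (1 + K * t) + 1 / (K + t)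
          = (K - 1) * K * (t - 1) ^ 2 / ((K + 1) * t * (1 + K * t) * (K + t)) := by
        field_simp
        ring
      rw [e]
      have := sub_nonneg.2 hK
      positivity
  have h := hmono (Set.mem_Ici.2 le_rfl) (Set.mem_Ici.2 hm) hm
  have e : g 1 = 0 := by simp [g, add_comm]
  rw [e] at h
  rw [Real.log_div (by positivity) (by positivity)]
  simp only [g] at h
  linarith

/-- The randomized response mechanism W^r on an alphabet of size q ≥ 2
(W^r(y|x) = e^ε/(e^ε+q−1) if y = x, 1/(e^ε+q−1) otherwise) is ε-LDP, and for any input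
distributions P₀, P₁ with output distributions Q₀, Q₁:
(i) d_TV(Q₀,Q₁) = ((e^ε − 1)/(e^ε + q − 1)) d_TV(P₀,P₁);
(ii) D^J_∞(Q₀,Q₁) ≤ min{2ε, ((e^ε−1)/(e^ε+1)) · D^J_∞(P₀,P₁)} whenever D^J_∞(P₀,P₁) < ∞
(here guaranteed by full support). -/
theorem stmt_19 {X : Type*} [Fintype X] [DecidableEq X] [Nonempty X]
    (hq : 2 ≤ Fintype.card X) (ε : ℝ) (hε : 0 < ε)
    (W : X → X → ℝ)
    (hW : ∀ x y, W x y = if y = x then Real.exp ε / (Real.exp ε + (Fintype.card X : ℝ) - 1)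
        else 1 / (Real.exp ε + (Fintype.card X : ℝ) - 1))
    (P₀ P₁ : X → ℝ) (h0 : ∀ x, 0 ≤ P₀ x) (h1 : ∀ x, 0 ≤ P₁ x)
    (hs0 : ∑ x, P₀ x = 1) (hs1 : ∑ x, P₁ x = 1) :
    (∀ x x' y, W x y ≤ Real.exp ε * W x' y) ∧
    ((1 / 2) * ∑ y, |(∑ x, P₀ x * W x y) - (∑ x, P₁ x * W x y)|
        = ((Real.exp ε - 1) / (Real.exp ε + (Fintype.card X : ℝ) - 1))
          * ((1 / 2) * ∑ x, |P₀ x - P₁ x|)) ∧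
    ((∀ x, 0 < P₀ x) → (∀ x, 0 < P₁ x) →
      Real.log (Finset.univ.sup' Finset.univ_nonempty fun y =>
          (∑ x, P₀ x * W x y) / (∑ x, P₁ x * W x y))
        + Real.log (Finset.univ.sup' Finset.univ_nonempty fun y =>
          (∑ x, P₁ x * W x y) / (∑ x, P₀ x * W x y))
      ≤ min (2 * ε)
          (((Real.exp ε - 1) / (Real.exp ε + 1)) *
            (Real.log (Finset.univ.sup' Finset.univ_nonempty fun x => P₀ x / P₁ x)
              + Real.log (Finset.univ.sup' Finset.univ_nonempty fun x => P₁ x / P₀ x)))) := by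
  set K := Real.exp ε with hKdef
  have hK : 1 < K := Real.one_lt_exp_iff.2 hε
  have hq' : (2 : ℝ) ≤ (Fintype.card X : ℝ) := by exact_mod_cast hq
  set D := K + (Fintype.card X : ℝ) - 1 with hDdef
  have hD : 0 < D := by linarith
  have hlo : ∀ x y, 1 / D ≤ W x y := by
    intro x y
    rw [hW]
    split_ifs
    · gcongr
    · exact le_rfl
  have hhi : ∀ x y, W x y ≤ K * (1 / D) := by
    intro x y
    rw [hW]
    split_ifs
    · exact le_of_eq (by ring)
    · exact le_mul_of_one_le_left (by positivity) hK.le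
  have hWW : ∀ x y x' y', W x y ≤ K * W x' y' := fun x y x' y' =>
    (hhi x y).trans (by gcongr; exact hlo x' y')
  have hWpos : ∀ x y, 0 < W x y := fun x y => (by positivity : 0 < 1 / D).trans_le (hlo x y)
  have hQ : ∀ P : X → ℝ, ∀ y, ∑ x, P x * W x y = (∑ x, P x) * (1 / D) + (K - 1) / D * P y := by
    intro P y
    have : ∀ x, P x * W x y = P x * (1 / D) + if y = x then (K - 1) / D * P x else 0 := by
      intro x
      rw [hW]
      split_ifs
      · ring
      · ring
    simp only [this, Finset.sum_add_distrib, Finset.sum_mul, Finset.sum_ite_eq,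
      Finset.mem_univ, if_true]
  refine ⟨fun x x' y => hWW x y x' y, ?_, ?_⟩
  · have : ∀ y, |(∑ x, P₀ x * W x y) - (∑ x, P₁ x * W x y)| = (K - 1) / D * |P₀ y - P₁ y| := by
      intro y
      rw [hQ, hQ, hs0, hs1, ← abs_of_nonneg (div_nonneg (sub_nonneg.2 hK.le) hD.le), ← abs_mul,
        abs_of_nonneg (div_nonneg (sub_nonneg.2 hK.le) hD.le)]
      congr 1
      ring
    simp only [this, ← Finset.mul_sum]
    ring
  · intro hp0 hp1
    have hQpos : ∀ P : X → ℝ, (∀ x, 0 < P x) → ∀ y, 0 < ∑ x, P x * W x y := fun P hP y =>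
      Finset.sum_pos (fun x _ => mul_pos (hP x) (hWpos x y)) Finset.univ_nonempty
    have hQnn : ∀ P : X → ℝ, (∀ x, 0 ≤ P x) → ∀ y, 0 ≤ ∑ x, P x * W x y := fun P hP y =>
      Finset.sum_nonneg (fun x _ => mul_nonneg (hP x) (hWpos x y).le)
    have hQK : ∀ P : X → ℝ, (∀ x, 0 ≤ P x) → ∀ y z,
        ∑ x, P x * W x y ≤ K * ∑ x, P x * W x z := by
      intro P hP y z
      rw [Finset.mul_sum]
      refine Finset.sum_le_sum fun x _ => ?_
      have := mul_le_mul_of_nonneg_left (hWW x y x z) (hP x)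
      linarith
    obtain ⟨y, -, hy⟩ := Finset.exists_mem_eq_sup' (Finset.univ_nonempty (α := X)) fun y =>
          (∑ x, P₀ x * W x y) / (∑ x, P₁ x * W x y)
    obtain ⟨z, -, hz⟩ := Finset.exists_mem_eq_sup' (Finset.univ_nonempty (α := X)) fun y =>
          (∑ x, P₁ x * W x y) / (∑ x, P₀ x * W x y)
    rw [hy, hz]
    set α := Finset.univ.sup' Finset.univ_nonempty fun x => P₀ x / P₁ x with hαdef
    set β := Finset.univ.sup' Finset.univ_nonempty fun x => P₁ x / P₀ x with hβdef
    have hα' : ∀ x, P₀ x / P₁ x ≤ α := fun x =>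
      Finset.le_sup' (fun x => P₀ x / P₁ x) (Finset.mem_univ x)
    have hβ' : ∀ x, P₁ x / P₀ x ≤ β := fun x =>
      Finset.le_sup' (fun x => P₁ x / P₀ x) (Finset.mem_univ x)
    have hα : 0 < α := (div_pos (hp0 y) (hp1 y)).trans_le (hα' y)
    have hβ : 0 < β := (div_pos (hp1 y) (hp0 y)).trans_le (hβ' y)
    have hαβ : 1 ≤ α * β := by
      have h := mul_le_mul (hα' y) (hβ' y) (div_pos (hp1 y) (hp0 y)).le hα.le
      rwa [div_mul_div_comm, mul_comm (P₁ y), div_self (mul_pos (hp0 y) (hp1 y)).ne'] at h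
    have hEnn : ∀ x, 0 ≤ α * P₁ x - P₀ x := fun x =>
      sub_nonneg.2 ((div_le_iff₀ (hp1 x)).1 (hα' x))
    have hFnn : ∀ x, 0 ≤ β * P₀ x - P₁ x := fun x =>
      sub_nonneg.2 ((div_le_iff₀ (hp0 x)).1 (hβ' x))
    have hEs : ∀ w, ∑ x, (α * P₁ x - P₀ x) * W x w
        = α * (∑ x, P₁ x * W x w) - ∑ x, P₀ x * W x w := by
      intro w
      simp only [Finset.mul_sum, ← Finset.sum_sub_distrib]
      exact Finset.sum_congr rfl fun x _ => by ring
    have hFs : ∀ w, ∑ x, (β * P₀ x - P₁ x) * W x w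
        = β * (∑ x, P₀ x * W x w) - ∑ x, P₁ x * W x w := by
      intro w
      simp only [Finset.mul_sum, ← Finset.sum_sub_distrib]
      exact Finset.sum_congr rfl fun x _ => by ring
    have hpE := hQnn _ hEnn y
    have hrE := hQnn _ hEnn z
    have hpF := hQnn _ hFnn y
    have hrF := hQnn _ hFnn z
    have hE := hQK _ hEnn z y
    have hF := hQK _ hFnn y z
    rw [hEs] at hpE hrE
    rw [hFs] at hpF hrF
    rw [hEs, hEs] at hE
    rw [hFs, hFs] at hF
    have hp₀ := hQpos P₀ hp0 y
    have hp₁ := hQpos P₁ hp1 y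
    have hr₀ := hQpos P₀ hp0 z
    have hr₁ := hQpos P₁ hp1 z
    have hc₀ := hQK P₀ h0 y z
    have hc₁ := hQK P₁ h1 z y
    generalize (∑ x, P₀ x * W x y) = p₀ at *
    generalize (∑ x, P₁ x * W x y) = p₁ at *
    generalize (∑ x, P₀ x * W x z) = r₀ at *
    generalize (∑ x, P₁ x * W x z) = r₁ at *
    rw [← Real.log_mul (by positivity) (by positivity),
      ← Real.log_mul hα.ne' hβ.ne', div_mul_div_comm]
    refine le_min ?_ ?_
    · have h : p₀ * r₁ / (p₁ * r₀) ≤ K ^ 2 := by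
        rw [div_le_iff₀ (by positivity)]
        have := mul_le_mul hc₀ hc₁ hr₁.le (by positivity)
        linarith
      have h2 := Real.log_le_log (by positivity) h
      rwa [Real.log_pow, hKdef, Real.log_exp, Nat.cast_ofNat] at h2
    · have hm2 : √(α * β) ^ 2 = α * β := Real.sq_sqrt (by positivity)
      have hm : 1 ≤ √(α * β) := Real.one_le_sqrt.2 hαβ
      rw [← hm2]
      generalize √(α * β) = m at hm hm2
      have h := birkhoff_ratio hK.le hm hβ hm2 hp₁ hpE hpF hrE hrF hE hF
      have h2 : p₀ * r₁ / (p₁ * r₀) ≤ ((1 + K * m) / (K + m)) ^ 2 := by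
        rw [div_pow, div_le_div_iff₀ (by positivity) (by positivity)]
        linarith
      have h3 := Real.log_le_log (by positivity) h2
      rw [Real.log_pow, Nat.cast_ofNat] at h3
      rw [Real.log_pow, Nat.cast_ofNat]
      have h4 := log_mobius_le hK.le hm
      linarith
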